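/- Let W = F_{q^n} × F_{q^n} and let U be an F_q-subspace of W with dim_{F_q} U = n whose linear set L_U has maximum field of linearity F_q, i.e., for every divisor e of n with e > 1 there is no F_{q^e}-subspace U' of W with L_{U'} = L_U. Then the rank of L_U as an F_q-linear set is uniquely defined: every F_q-subspace V of W with L_V = L_U satisfies dim_{F_q} V = n. -/

import Mathlib

/-- The `F_q`-linear set of PG(1,q^n) defined by a set `S ⊆ F × F`: the set of
one-dimensional `F`-subspaces spanned by the nonzero vectors of `S`. -/
def linSet (F : Type) [Field F] (S : Set (F × F)) : Set (Submodule F (F × F)) :=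
  {X | ∃ u ∈ S, u ≠ 0 ∧ X = Submodule.span F {u}}

section

open Polynomial

theorem prod_X_sub_C_univ (K : Type*) [Field K] [Fintype K] :
    ∏ a : K, (X - C a) = (X ^ Fintype.card K - X : K[X]) := by
  classical
  have h := FiniteField.roots_X_pow_card_sub_X K
  have hm : (X ^ Fintype.card K - X : K[X]).Monic :=
    monic_X_pow_sub (by rw [degree_X]; exact_mod_cast Fintype.one_lt_card)
  have := prod_multiset_X_sub_C_of_monic_of_roots_card_eq hm (by
    rw [h, FiniteField.X_pow_card_sub_X_natDegree_eq K Fintype.one_lt_card]; rfl)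
  rw [h] at this
  exact this

theorem prod_sub_smul {K A : Type*} [Field K] [Fintype K] [CommRing A] [IsDomain A] [Algebra K A]
    (h t : A) :
    ∏ a : K, (h - a • t) = h ^ Fintype.card K - t ^ (Fintype.card K - 1) * h := by
  by_cases ht : t = 0
  · subst ht
    have : Fintype.card K - 1 ≠ 0 := by have := Fintype.one_lt_card (α := K); omega
    simp [this]
  · apply IsFractionRing.injective A (FractionRing A)
    have ht' : algebraMap A (FractionRing A) t ≠ 0 := by simpa using ht
    have e := congrArg (aeval (algebraMap A (FractionRing A) h / algebraMap A (FractionRing A) t))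
      (prod_X_sub_C_univ K)
    simp only [map_prod, map_sub, aeval_X, aeval_C, map_pow] at e
    have e2 := congrArg (· * (algebraMap A (FractionRing A) t) ^ Fintype.card K) e
    simp only [← Finset.card_univ, Finset.pow_card_mul_prod, mul_comm _ (_ ^ _)] at e2
    obtain ⟨m, hm⟩ : ∃ m, Fintype.card K = m + 1 :=
      ⟨_, (Nat.succ_pred_eq_of_pos Fintype.card_pos).symm⟩
    simp only [map_prod, map_sub, map_mul, map_pow, Algebra.smul_def,
      ← IsScalarTower.algebraMap_apply]
    convert e2 using 1
    · refine Finset.prod_congr rfl fun a _ => ?_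
      field_simp
    · rw [Finset.card_univ, mul_sub, ← mul_pow, mul_div_cancel₀ _ ht', hm, Nat.add_sub_cancel,
        pow_succ _ m, pow_succ _ m, mul_assoc, mul_div_cancel₀ _ ht']

theorem exists_prod_X_sub_C_eq_sum {K B : Type*} [Field K] [Fintype K] [CommRing B] [IsDomain B]
    [Algebra K B] : ∀ (r : ℕ) (b : Fin r → B), ∃ c : ℕ → B,
      ∏ v : Fin r → K, (X - C (∑ i, v i • b i)) =
        ∑ i ∈ Finset.range (r + 1), C (c i) * X ^ Fintype.card K ^ i
  | 0, b => ⟨1, by simp⟩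
  | r + 1, b => by
    obtain ⟨c, hc⟩ := exists_prod_X_sub_C_eq_sum (K := K) r (fun i => b i.succ)
    set h : B[X] := ∏ v : Fin r → K, (X - C (∑ i, v i • b i.succ)) with hh
    set q := Fintype.card K with hq
    set t : B[X] := ∑ i ∈ Finset.range (r + 1), C (c i * b 0 ^ q ^ i) with ht
    have key : ∀ a : K, ∏ v : Fin r → K, (X - C (a • b 0 + ∑ i, v i • b i.succ)) = h - a • t := by
      intro a
      have h1 : ∏ v : Fin r → K, (X - C (a • b 0 + ∑ i, v i • b i.succ))
          = h.comp (X - C (a • b 0)) := by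
        simp only [hh, prod_comp, sub_comp, X_comp, C_comp, C_add, sub_sub]
      have h2 : ∀ i, (X - C (a • b 0)) ^ q ^ i = X ^ q ^ i - a • C (b 0 ^ q ^ i) := by
        intro i
        have := map_sub (FiniteField.frobeniusAlgHom K B[X] ^ i) X (a • C (b 0))
        rw [map_smul, AlgHom.coe_pow, FiniteField.coe_frobeniusAlgHom] at this
        simp only [pow_iterate] at this
        rw [← smul_C, this, ← C_pow]
      rw [h1, hc]
      simp only [Polynomial.sum_comp, mul_comp, C_comp, pow_comp, X_comp, h2, mul_sub,
        Finset.sum_sub_distrib, ht, Finset.smul_sum, C_mul, mul_smul_comm]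
    refine ⟨fun i => (if i = 0 then 0 else c (i - 1) ^ q) -
      (if i = r + 1 then 0 else
        (∑ i ∈ Finset.range (r + 1), c i * b 0 ^ q ^ i) ^ (q - 1) * c i), ?_⟩
    have h3 : ∏ v : Fin (r + 1) → K, (X - C (∑ i, v i • b i)) = ∏ a : K, (h - a • t) := by
      rw [← (Fin.consEquiv fun _ : Fin (r + 1) => K).prod_comp, Fintype.prod_prod_type]
      simp only [Fin.sum_univ_succ, Fin.consEquiv, Equiv.coe_fn_mk, Fin.cons_zero, Fin.cons_succ,
        key]
    have h4 : h ^ q = ∑ i ∈ Finset.range (r + 1), C (c i ^ q) * X ^ q ^ (i + 1) := by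
      have := map_sum (FiniteField.frobeniusAlgHom K B[X])
        (fun i => C (c i) * X ^ q ^ i) (Finset.range (r + 1))
      rw [FiniteField.coe_frobeniusAlgHom, ← hq] at this
      simp only [mul_pow, ← pow_mul, ← pow_succ, ← C_pow] at this
      rw [hc, this]
    have h5 : t = C (∑ i ∈ Finset.range (r + 1), c i * b 0 ^ q ^ i) := by
      rw [ht, map_sum]
    rw [h3, prod_sub_smul, h4, h5, hc]
    simp only [C_sub, sub_mul, Finset.sum_sub_distrib]
    congr 1
    · rw [Finset.sum_range_succ' _ (r + 1)]
      simp
    · rw [Finset.sum_range_succ _ (r + 1), Finset.mul_sum]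
      simp only [if_true, C_0, zero_mul, add_zero]
      refine Finset.sum_congr rfl fun i hi => ?_
      rw [if_neg (Finset.mem_range.1 hi).ne, C_mul, C_pow, mul_assoc]

theorem natDegree_sum_smul_eq {F ι : Type*} [Field F] [Fintype ι] (ρ : ι → F[X]) (c : ι → F)
    (j : ι) (hc : c j ≠ 0) (hj : ρ j ≠ 0)
    (hmax : ∀ i, c i ≠ 0 → ρ i ≠ 0 → (ρ i).natDegree ≤ (ρ j).natDegree)
    (huniq : ∀ i, ρ i ≠ 0 → (ρ i).natDegree = (ρ j).natDegree → i = j) :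
    ∑ i, c i • ρ i ≠ 0 ∧ (∑ i, c i • ρ i).natDegree = (ρ j).natDegree := by
  have hcoeff : (∑ i, c i • ρ i).coeff (ρ j).natDegree ≠ 0 := by
    rw [finsetSum_coeff, Finset.sum_eq_single j]
    · simpa using ⟨hc, hj⟩
    · intro i _ hij
      rw [coeff_smul, smul_eq_mul, mul_eq_zero]
      by_cases hci : c i = 0
      · exact Or.inl hci
      · refine Or.inr ?_
        by_cases hi : ρ i = 0
        · simp [hi]
        · exact coeff_eq_zero_of_natDegree_lt
            (lt_of_le_of_ne (hmax i hci hi) fun h => hij (huniq i hi h))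
    · simp
  refine ⟨fun h => hcoeff (by simp [h]), le_antisymm ?_ (le_natDegree_of_ne_zero hcoeff)⟩
  refine natDegree_sum_le_of_forall_le _ _ fun i _ => ?_
  by_cases hci : c i = 0
  · simp [hci]
  by_cases hi : ρ i = 0
  · simp [hi]
  exact (natDegree_smul_le _ _).trans (hmax i hci hi)

theorem natDegree_sum_lt_of_forall_lt {R ι : Type*} [Semiring R] (s : Finset ι) (f : ι → R[X])
    {N : ℕ} (hN : 0 < N) (h : ∀ i ∈ s, (f i).natDegree < N) : (∑ i ∈ s, f i).natDegree < N :=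
  (natDegree_sum_le_of_forall_le s f (n := N - 1) fun i hi =>
    Nat.le_sub_one_of_lt (h i hi)).trans_lt (Nat.sub_one_lt hN.ne')

theorem natDegree_injective_of_system {F ι : Type*} [Field F] [Fintype ι] (w : ι → ℕ)
    (hw : ∀ i, 0 < w i) (hinj : Function.Injective fun A : Finset ι => ∑ i ∈ A, w i)
    (i₀ : ι) (N : ℕ) (ρ : ι → F[X]) (A : ι → ι → F) (g : F[X]) (hg : g.natDegree = N)
    (hlt : ∀ i, (ρ i).natDegree < N)
    (h₀ : X ^ w i₀ * ρ i₀ = ∑ j, A j i₀ • ρ j + g)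
    (h : ∀ i, i ≠ i₀ → X ^ w i * ρ i = ∑ j, A j i • ρ j) :
    ρ i₀ ≠ 0 ∧ ∀ i j, ρ i ≠ 0 → ρ j ≠ 0 → (ρ i).natDegree = (ρ j).natDegree → i = j := by
  classical
  have hdeg : ∀ i, ρ i ≠ 0 → (X ^ w i * ρ i).natDegree = (ρ i).natDegree + w i := fun i hi => by
    rw [natDegree_mul (pow_ne_zero _ X_ne_zero) hi, natDegree_X_pow, add_comm]
  have hcomb : (∑ j, A j i₀ • ρ j).natDegree < g.natDegree := by
    rw [hg]
    exact natDegree_sum_lt_of_forall_lt _ _ ((Nat.zero_le _).trans_lt (hlt i₀))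
      fun i _ => (natDegree_smul_le _ _).trans_lt (hlt i)
  have hN : (X ^ w i₀ * ρ i₀).natDegree = N := by
    rw [h₀, natDegree_add_eq_right_of_natDegree_lt hcomb, hg]
  have hρ₀ : ρ i₀ ≠ 0 := by
    intro h0
    rw [h0, mul_zero, natDegree_zero] at hN
    exact absurd (hlt i₀) (by omega)
  refine ⟨hρ₀, ?_⟩
  let P : ι → Finset ι → Prop := fun i S => i ∈ S ∧ (ρ i).natDegree + ∑ k ∈ S, w k = N ∧
    ∀ k ∈ S, k ≠ i → (ρ i).natDegree < (ρ k).natDegree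
  have hP : ∀ i j S T, P i S → P j T → (ρ i).natDegree = (ρ j).natDegree → i = j := by
    rintro i j S T ⟨hiS, hS, -⟩ ⟨-, hT, hT'⟩ hij
    have hST : S = T := hinj (by dsimp only; omega)
    by_contra hne
    exact absurd (hT' i (hST ▸ hiS) hne) (by omega)
  have hex : ∀ t i, ρ i ≠ 0 → N ≤ (ρ i).natDegree + t → ∃ S, P i S := by
    intro t
    induction t with
    | zero => intro i _ hi; exact absurd (hlt i) (by omega)
    | succ t ih =>
      intro i hi hit
      by_cases hi₀ : i = i₀
      · subst hi₀
        refine ⟨{i}, by simp, ?_, by simp⟩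
        rw [Finset.sum_singleton, ← hdeg i hi, hN]
      have hd := hdeg i hi
      rw [h i hi₀] at hd
      have hwi := hw i
      obtain ⟨k, hk, hkd⟩ : ∃ k, (A k i ≠ 0 ∧ ρ k ≠ 0) ∧
          (ρ i).natDegree + w i ≤ (ρ k).natDegree := by
        by_contra! hcon
        have : (∑ j, A j i • ρ j).natDegree < (ρ i).natDegree + w i := by
          refine natDegree_sum_lt_of_forall_lt _ _ (by omega) fun j _ => ?_
          by_cases hA : A j i = 0
          · simp [hA]; omega
          by_cases hj : ρ j = 0
          · simp [hj]; omega
          exact (natDegree_smul_le _ _).trans_lt (hcon j ⟨hA, hj⟩)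
        omega
      obtain ⟨j, hj, hjmax⟩ := Finset.exists_max_image
        (Finset.univ.filter fun k => A k i ≠ 0 ∧ ρ k ≠ 0) (fun k => (ρ k).natDegree)
        ⟨k, by simpa using hk⟩
      simp only [Finset.mem_filter, Finset.mem_univ, true_and] at hj hjmax
      have hkj := hjmax k hk
      obtain ⟨T, hT⟩ := ih j hj.2 (by omega)
      have := (natDegree_sum_smul_eq ρ (A · i) j hj.1 hj.2 (fun k h1 h2 => hjmax k ⟨h1, h2⟩)
        (fun k hk hkj' => by
          obtain ⟨S, hS⟩ := ih k hk (by omega)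
          exact hP k j S T hS hT hkj')).2
      obtain ⟨hT1, hT2, hT3⟩ := hT
      have hT4 : ∀ k ∈ T, (ρ i).natDegree < (ρ k).natDegree := fun k hk => by
        by_cases hkj : k = j
        · subst hkj; omega
        · have := hT3 k hk hkj; omega
      refine ⟨insert i T, by simp, ?_, ?_⟩
      · rw [Finset.sum_insert fun hiT => (hT4 i hiT).false]
        omega
      · intro k hk hki
        exact hT4 k ((Finset.mem_insert.1 hk).resolve_left hki)
  intro i j hi hj hij
  obtain ⟨S, hS⟩ := hex N i hi (by omega)
  obtain ⟨T, hT⟩ := hex N j hj (by omega)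
  exact hP i j S T hS hT hij

theorem exists_dvd_val_of_add_mem {n : ℕ} [NeZero n] {Z J : Set (ZMod n)} (h0 : 0 ∈ Z)
    (hZJ : ∀ i ∈ Z, ∀ j ∈ J, i + j ∈ Z) (h1 : -1 ∉ Z) :
    ∃ m, m ∣ n ∧ 1 < m ∧ ∀ j ∈ J, m ∣ j.val := by
  have hcl : ∀ h ∈ AddSubgroup.closure J, ∀ z ∈ Z, z + h ∈ Z := by
    intro h hh
    induction hh using AddSubgroup.closure_induction with
    | mem x hx => exact fun z hz => hZJ z hz x hx
    | zero => simp
    | add x y _ _ hx hy => intro z hz; rw [← add_assoc]; exact hy _ (hx z hz)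
    | neg x _ hx =>
      have hmul : ∀ k : ℕ, ∀ z ∈ Z, z + k • x ∈ Z := by
        intro k
        induction k with
        | zero => simp
        | succ k ih => intro z hz; rw [succ_nsmul, ← add_assoc]; exact hx _ (ih z hz)
      have hneg : -x = (n - 1) • x := by
        rw [neg_eq_iff_add_eq_zero, ← succ_nsmul', Nat.sub_add_cancel (NeZero.pos n)]
        simp
      rw [hneg]
      exact hmul _
  set H := AddSubgroup.closure J
  have hone : (1 : ZMod n) ∉ H := fun h => h1 (by simpa using hcl _ (H.neg_mem h) 0 h0)
  set u : ZMod n ⧸ H := QuotientAddGroup.mk 1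
  have hu : ∀ k : ℕ, k • u = QuotientAddGroup.mk (k : ZMod n) := fun k => by
    rw [← QuotientAddGroup.mk_nsmul, nsmul_one]
  have hun : addOrderOf u ∣ n := addOrderOf_dvd_of_nsmul_eq_zero (by rw [hu]; simp)
  refine ⟨addOrderOf u, hun, ?_, fun j hj => addOrderOf_dvd_of_nsmul_eq_zero ?_⟩
  · have hpos := Nat.pos_of_dvd_of_pos hun (NeZero.pos n)
    have : addOrderOf u ≠ 1 := fun h =>
      hone ((QuotientAddGroup.eq_zero_iff _).1 (AddMonoid.addOrderOf_eq_one_iff.1 h))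
    omega
  · rw [hu, ZMod.natCast_zmod_val]
    exact (QuotientAddGroup.eq_zero_iff _).2 (AddSubgroup.subset_closure hj)

theorem natDegree_coeff_prod_X_sub_C_le {R ι : Type*} [CommRing R] [Nontrivial R] (s : Finset ι)
    (φ : ι → R[X]) (hφ : ∀ i ∈ s, (φ i).natDegree ≤ 1) (j : ℕ) :
    ((∏ i ∈ s, (X - C (φ i))).coeff j).natDegree ≤ s.card - j := by
  classical
  induction s using Finset.induction_on generalizing j with
  | empty =>
    simp only [Finset.prod_empty, coeff_one]
    split_ifs <;> simp
  | insert a s ha ih =>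
    have ih' := ih fun i hi => hφ i (Finset.mem_insert_of_mem hi)
    have ha1 := hφ a (Finset.mem_insert_self _ _)
    rw [Finset.prod_insert ha, Finset.card_insert_of_notMem ha, sub_mul, coeff_sub, coeff_C_mul]
    by_cases hj : s.card < j
    · have hdeg : (∏ i ∈ s, (X - C (φ i))).coeff j = 0 :=
        coeff_eq_zero_of_natDegree_lt (by rwa [natDegree_finsetProd_X_sub_C_eq_card])
      rw [hdeg, mul_zero, sub_zero]
      obtain ⟨j, rfl⟩ : ∃ k, j = k + 1 := ⟨j - 1, by omega⟩
      rw [coeff_X_mul]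
      exact (ih' j).trans (by omega)
    · refine (natDegree_sub_le _ _).trans (max_le ?_ ?_)
      · cases j with
        | zero => simp
        | succ j => rw [coeff_X_mul]; exact (ih' j).trans (by omega)
      · exact natDegree_mul_le.trans ((add_le_add ha1 (ih' j)).trans (by omega))

theorem linearIndependent_frobenius_pow {K F : Type*} [Field K] [Fintype K] [Field F] [Finite F]
    [Algebra K F] {n : ℕ} [NeZero n] (hn : Module.finrank K F = n) :
    LinearIndependent F
      fun k : ZMod n => (FiniteField.frobeniusAlgHom K F ^ k.val).toLinearMap := by
  subst hn
  exact (linearIndependent_toLinearMap K F F).comp _ fun i j hij => ZMod.val_injective _ <|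
    congrArg Fin.val ((FiniteField.bijective_frobeniusAlgHom_pow K F).1
      (a₁ := ⟨i.val, ZMod.val_lt i⟩) (a₂ := ⟨j.val, ZMod.val_lt j⟩) hij)

theorem pow_card_pow_eq_frobenius {K F : Type*} [Field K] [Fintype K] [Field F] [Algebra K F]
    (k : ℕ) (x : F) :
    x ^ Fintype.card K ^ k = (FiniteField.frobeniusAlgHom K F ^ k).toLinearMap x := by
  rw [AlgHom.toLinearMap_apply, AlgHom.coe_pow, FiniteField.coe_frobeniusAlgHom, pow_iterate]

theorem exists_eq_sum_pow {K F : Type*} [Field K] [Fintype K] [Field F] [Finite F] [Algebra K F]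
    {n : ℕ} [NeZero n] (hn : Module.finrank K F = n) (f : F →ₗ[K] F) :
    ∃ a : ZMod n → F, ∀ x, f x = ∑ k, a k * x ^ Fintype.card K ^ k.val := by
  have hspan := (linearIndependent_frobenius_pow hn).span_eq_top_of_card_eq_finrank (by
    rw [Module.finrank_linearMap_self, hn, ZMod.card])
  obtain ⟨a, ha⟩ := (Submodule.mem_span_range_iff_exists_fun F).1
    (hspan.symm ▸ Submodule.mem_top : f ∈ _)
  refine ⟨a, fun x => ?_⟩
  simp only [pow_card_pow_eq_frobenius, ← ha, LinearMap.sum_apply, LinearMap.smul_apply,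
    smul_eq_mul]

theorem eq_zero_of_sum_C_pow_mul_eq_zero {K F : Type*} [Field K] [Fintype K] [Field F] [Finite F]
    [Algebra K F] {n : ℕ} [NeZero n] (hn : Module.finrank K F = n) (c : ZMod n → F[X])
    (h : ∀ x : F, ∑ k, C (x ^ Fintype.card K ^ k.val) * c k = 0)
    (k : ZMod n) : c k = 0 := by
  ext m
  have hli := linearIndependent_frobenius_pow (K := K) (F := F) hn
  rw [Fintype.linearIndependent_iff] at hli
  refine hli (fun k => (c k).coeff m) ?_ k
  ext x
  have := congrArg (coeff · m) (h x)
  simp only [finsetSum_coeff, coeff_C_mul, coeff_zero, pow_card_pow_eq_frobenius] at this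
  rw [LinearMap.sum_apply, LinearMap.zero_apply, ← this]
  exact Finset.sum_congr rfl fun k _ => mul_comm _ _

theorem coeff_sum_C_mul_X_pow_pow {R : Type*} [Semiring R] {q : ℕ} (hq : 2 ≤ q) (c : ℕ → R)
    {m i : ℕ} (hi : i < m) :
    (∑ j ∈ Finset.range m, C (c j) * X ^ q ^ j).coeff (q ^ i) = c i := by
  rw [finsetSum_coeff, Finset.sum_eq_single i]
  · simp
  · intro j _ hj
    rw [coeff_C_mul_X_pow, if_neg fun h => hj (Nat.pow_right_injective hq h).symm]
  · intro h
    exact absurd (Finset.mem_range.2 hi) h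

theorem exists_redei_eq_sum {K F : Type*} [Field K] [Fintype K] [Field F] [Fintype F] [Algebra K F]
    {n : ℕ} (hn : Module.finrank K F = n) (f : F →ₗ[K] F) :
    ∃ c : ℕ → F[X],
      ∏ a : F, (X - C (C (f a) - C a * X)) =
        ∑ i ∈ Finset.range (n + 1), C (c i) * X ^ Fintype.card K ^ i ∧
      c n = 1 ∧ ∀ i ≤ n, (c i).natDegree ≤ Fintype.card K ^ n - Fintype.card K ^ i := by
  have hcard : Fintype.card F = Fintype.card K ^ n := by
    rw [Module.card_eq_pow_finrank (K := K), hn]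
  let φ : F →ₗ[K] F[X] := ((monomial 0 : F →ₗ[F] F[X]).restrictScalars K).comp f -
    (monomial 1 : F →ₗ[F] F[X]).restrictScalars K
  have hφ : ∀ a, φ a = C (f a) - C a * X := fun a => by
    rw [C_mul_X_eq_monomial, ← monomial_zero_left]
    rfl
  let b := Module.finBasisOfFinrankEq K F hn
  obtain ⟨c, hc⟩ := exists_prod_X_sub_C_eq_sum (K := K) n fun i => φ (b i)
  have hprod : ∏ a : F, (X - C (C (f a) - C a * X)) =
      ∑ i ∈ Finset.range (n + 1), C (c i) * X ^ Fintype.card K ^ i := by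
    rw [← hc, ← b.equivFun.symm.toEquiv.prod_comp]
    refine Finset.prod_congr rfl fun v _ => ?_
    rw [← hφ, LinearEquiv.coe_toEquiv, b.equivFun_symm_apply, map_sum]
    simp only [map_smul]
  have hcoeff : ∀ i ≤ n, c i = (∏ a : F, (X - C (C (f a) - C a * X))).coeff
      (Fintype.card K ^ i) := fun i hi => by
    rw [hprod, coeff_sum_C_mul_X_pow_pow Fintype.one_lt_card c (Nat.lt_succ_of_le hi)]
  refine ⟨c, hprod, ?_, fun i hi => ?_⟩
  · have h := (monic_prod_X_sub_C (fun a : F => C (f a) - C a * X) Finset.univ).coeff_natDegree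
    rwa [natDegree_finsetProd_X_sub_C_eq_card, Finset.card_univ, hcard, ← hcoeff n le_rfl] at h
  · rw [hcoeff i hi, ← hcard]
    refine natDegree_coeff_prod_X_sub_C_le _ _ (fun a _ => ?_) _
    exact (natDegree_sub_le _ _).trans (max_le (by simp) ((natDegree_C_mul_le _ _).trans
      natDegree_X_le))

theorem sum_zmod_val {M : Type*} [AddCommMonoid M] {n : ℕ} [NeZero n] (g : ℕ → M) :
    ∑ k : ZMod n, g k.val = ∑ i ∈ Finset.range n, g i := by
  refine Finset.sum_bij (fun k _ => k.val) (fun k _ => Finset.mem_range.2 (ZMod.val_lt k))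
    (fun _ _ _ _ h => ZMod.val_injective _ h) (fun i hi => ⟨i, Finset.mem_univ _, ?_⟩)
    fun _ _ => rfl
  exact ZMod.val_natCast_of_lt (Finset.mem_range.1 hi)

theorem sub_pow_card_pow {K A : Type*} [Field K] [Fintype K] [CommRing A] [Algebra K A]
    (i : ℕ) (x y : A) :
    (x - y) ^ Fintype.card K ^ i = x ^ Fintype.card K ^ i - y ^ Fintype.card K ^ i := by
  have := map_sub (FiniteField.frobeniusAlgHom K A ^ i) x y
  rw [AlgHom.coe_pow, FiniteField.coe_frobeniusAlgHom] at this
  simpa only [pow_iterate] using this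

theorem sum_pow_card_pow {K A ι : Type*} [Field K] [Fintype K] [CommRing A] [Algebra K A]
    (i : ℕ) (s : Finset ι) (g : ι → A) :
    (∑ k ∈ s, g k) ^ Fintype.card K ^ i = ∑ k ∈ s, g k ^ Fintype.card K ^ i := by
  have := map_sum (FiniteField.frobeniusAlgHom K A ^ i) g s
  rw [AlgHom.coe_pow, FiniteField.coe_frobeniusAlgHom] at this
  simpa only [pow_iterate] using this

theorem pow_pow_mod {M : Type*} [Monoid M] {q n : ℕ} {x : M} (hx : x ^ q ^ n = x) (i : ℕ) :
    x ^ q ^ (i % n) = x ^ q ^ i := by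
  have h : ∀ t, x ^ q ^ (n * t) = x := fun t => by
    induction t with
    | zero => simp
    | succ t ih => rw [Nat.mul_succ, pow_add, pow_mul, ih, hx]
  conv_rhs => rw [← Nat.div_add_mod i n, pow_add, pow_mul, h]

theorem pow_pow_eq_sum {K F : Type*} [Field K] [Fintype K] [Field F] [Algebra K F]
    {n : ℕ} [NeZero n] (hpow : ∀ x : F, x ^ Fintype.card K ^ n = x) {f : F → F} {a : ZMod n → F}
    (ha : ∀ x, f x = ∑ k, a k * x ^ Fintype.card K ^ k.val) (i : ZMod n) (x : F) :
    f x ^ Fintype.card K ^ i.val =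
      ∑ k, a (k - i) ^ Fintype.card K ^ i.val * x ^ Fintype.card K ^ k.val := by
  rw [ha, sum_pow_card_pow, ← (Equiv.subRight i).sum_comp]
  refine Finset.sum_congr rfl fun k _ => ?_
  have hk : k.val = ((k - i).val + i.val) % n := by rw [← ZMod.val_add, sub_add_cancel]
  rw [Equiv.subRight_apply, mul_pow, ← pow_mul, ← pow_add, hk, pow_pow_mod (hpow x)]

theorem exists_dvd_map_mul_of_ncard_lt {K F : Type*} [Field K] [Fintype K] [Field F] [Fintype F]
    [Algebra K F] {n : ℕ} (hn : Module.finrank K F = n) (hn2 : 2 ≤ n) (f : F →ₗ[K] F)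
    (hD : {y : F | ∃ a, a ≠ 0 ∧ f a = y * a}.ncard < Fintype.card K ^ (n - 1)) :
    ∃ m, m ∣ n ∧ 1 < m ∧ ∀ l : F, l ^ Fintype.card K ^ m = l → ∀ x, f (l * x) = l * f x := by
  classical
  have : NeZero n := ⟨by omega⟩
  have hcard : Fintype.card F = Fintype.card K ^ n := by
    rw [Module.card_eq_pow_finrank (K := K), hn]
  have hpowF : ∀ x : F, x ^ Fintype.card K ^ n = x := fun x => by
    rw [← hcard, FiniteField.pow_card]
  obtain ⟨a, ha⟩ := exists_eq_sum_pow hn f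
  obtain ⟨c, hR, hcn, hcdeg⟩ := exists_redei_eq_sum hn f
  have hfpow := pow_pow_eq_sum hpowF ha
  have hsub := sub_pow_card_pow (K := K) (A := F[X])
  set q := Fintype.card K with hq
  have hq2 : 2 ≤ q := Fintype.one_lt_card
  have hqn : 1 < q ^ n := Nat.one_lt_pow (by omega) hq2
  have hval0 : (0 : ZMod n).val = 0 := ZMod.val_zero
  have hval : ∀ k : ZMod n, k.val < n := fun k => ZMod.val_lt k
  set ρ : ZMod n → F[X] := fun k => c k.val + if k = 0 then 1 else 0 with hρ
  have hρdeg : ∀ k, (ρ k).natDegree < q ^ n := by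
    intro k
    have h1 := hcdeg k.val (hval k).le
    have h2 : 0 < q ^ k.val := Nat.pow_pos (by omega)
    refine (natDegree_add_le _ _).trans_lt (max_lt (by omega) ?_)
    split_ifs <;> simp <;> omega
  have hsum : ∀ x : F, ∑ k, C (x ^ q ^ k.val) * ((∑ i, a (k - i) ^ q ^ i.val • ρ i) -
      X ^ q ^ k.val * ρ k + if k = 0 then X - X ^ q ^ n else 0) = 0 := by
    intro x
    have hroot : ∑ i ∈ Finset.range (n + 1), c i * (C (f x) - C x * X) ^ q ^ i = 0 := by
      have h := congrArg (eval (C (f x) - C x * X)) hR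
      rw [eval_prod, Finset.prod_eq_zero (Finset.mem_univ x) (by simp), eval_finsetSum] at h
      simpa using h.symm
    rw [Finset.sum_range_succ, hcn, one_mul, hsub, ← C_pow, mul_pow, ← C_pow, hpowF, hpowF,
      ← sum_zmod_val fun i => c i * (C (f x) - C x * X) ^ q ^ i] at hroot
    have hρsum : ∑ k : ZMod n, ρ k * (C (f x) - C x * X) ^ q ^ k.val = C x * (X ^ q ^ n - X) := by
      simp only [hρ, add_mul, Finset.sum_add_distrib, ite_mul, one_mul, zero_mul,
        Finset.sum_ite_eq', Finset.mem_univ, if_true, hval0, pow_zero, pow_one]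
      linear_combination hroot
    simp only [hsub, ← C_pow, mul_pow, hfpow, map_sum, mul_sub, Finset.sum_sub_distrib,
      Finset.mul_sum] at hρsum
    rw [Finset.sum_comm] at hρsum
    simp only [mul_add, mul_sub, Finset.sum_add_distrib, Finset.sum_sub_distrib, mul_ite, mul_zero,
      Finset.sum_ite_eq', Finset.mem_univ, if_true, hval0, pow_zero, pow_one, Finset.mul_sum,
      smul_eq_C_mul]
    have e1 : ∑ k : ZMod n, ∑ i : ZMod n, C (x ^ q ^ k.val) * (C (a (k - i) ^ q ^ i.val) * ρ i) =
        ∑ k : ZMod n, ∑ i : ZMod n, ρ i * C (a (k - i) ^ q ^ i.val * x ^ q ^ k.val) :=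
      Finset.sum_congr rfl fun k _ => Finset.sum_congr rfl fun i _ => by rw [C_mul]; ring
    have e2 : ∑ k : ZMod n, C (x ^ q ^ k.val) * (X ^ q ^ k.val * ρ k) =
        ∑ k : ZMod n, ρ k * (C (x ^ q ^ k.val) * X ^ q ^ k.val) :=
      Finset.sum_congr rfl fun k _ => by ring
    rw [e1, e2, hρsum]
    ring
  have hrel := eq_zero_of_sum_C_pow_mul_eq_zero hn _ hsum
  have hrel0 : X ^ q ^ (0 : ZMod n).val * ρ 0 =
      (∑ i, a (0 - i) ^ q ^ i.val • ρ i) + (X - X ^ q ^ n) := by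
    have := hrel 0
    rw [if_pos rfl] at this
    linear_combination -this
  have hrel' : ∀ k, k ≠ 0 → X ^ q ^ k.val * ρ k = ∑ i, a (k - i) ^ q ^ i.val • ρ i := by
    intro k hk
    have := hrel k
    rw [if_neg hk] at this
    linear_combination -this
  have hinj : Function.Injective fun A : Finset (ZMod n) => ∑ k ∈ A, q ^ k.val := by
    intro A B hAB
    let v : ZMod n ↪ ℕ := ⟨ZMod.val, ZMod.val_injective n⟩
    have h := Finset.geomSum_injective hq2 (a₁ := A.map v) (a₂ := B.map v) (by
      simpa only [Finset.sum_map] using! hAB)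
    exact Finset.map_injective v h
  obtain ⟨hρ0, hρinj⟩ := natDegree_injective_of_system (fun k : ZMod n => q ^ k.val)
    (fun k => Nat.pow_pos (by omega)) hinj 0 (q ^ n) ρ (fun i k => a (k - i) ^ q ^ i.val)
    (X - X ^ q ^ n) (by
      rw [natDegree_sub_eq_right_of_natDegree_lt] <;> simp [hqn]) hρdeg hrel0 hrel'
  have hneg : ρ (-1) = 0 := by
    have hv : (-1 : ZMod n).val = n - 1 := by
      obtain ⟨t, rfl⟩ : ∃ t, n = t + 1 := ⟨n - 1, by omega⟩
      exact ZMod.val_neg_one t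
    have hne : (-1 : ZMod n) ≠ 0 := fun h => by rw [h, hval0] at hv; omega
    have hlt : q ^ 0 < q ^ (n - 1) := Nat.pow_lt_pow_right hq2 (by omega)
    have hlt' : q ^ (n - 1) < q ^ n := Nat.pow_lt_pow_right hq2 (by omega)
    simp only [hρ, hv, if_neg hne, add_zero]
    refine eq_zero_of_natDegree_lt_card_of_eval_eq_zero' (c (n - 1))
      ({y : F | ∃ a, a ≠ 0 ∧ f a = y * a}ᶜ.toFinset) (fun y hy => ?_) ?_
    · have hbij : Function.Bijective fun a => f a - y * a := by
        refine Finite.injective_iff_bijective.1 fun u v huv => ?_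
        by_contra hne
        simp only [Set.mem_toFinset, Set.mem_compl_iff, Set.mem_ofPred_eq, not_exists] at hy
        refine hy (u - v) ⟨sub_ne_zero.2 hne, ?_⟩
        rw [map_sub]
        linear_combination huv
      have h := congrArg (Polynomial.map (evalRingHom y)) hR
      simp only [Polynomial.map_prod, Polynomial.map_sub, map_X, map_C, coe_evalRingHom, eval_sub,
        eval_mul, eval_C, eval_X, Polynomial.map_sum, Polynomial.map_mul, Polynomial.map_pow] at h
      have h' : ∏ a : F, (X - C (f a - a * y)) = X ^ q ^ n - X := by
        rw [← hcard, ← prod_X_sub_C_univ, ← hbij.prod_comp (fun z => X - C z)]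
        simp only [mul_comm y]
      rw [h'] at h
      have h2 := congrArg (coeff · (q ^ (n - 1))) h
      simp only [coeff_sub, coeff_X_pow, coeff_X] at h2
      rw [coeff_sum_C_mul_X_pow_pow hq2 _ (by omega), if_neg hlt'.ne,
        if_neg (by simpa using hlt.ne)] at h2
      simpa using h2.symm
    · have h1 := hcdeg (n - 1) (by omega)
      have h2 := Set.ncard_add_ncard_compl {y : F | ∃ a, a ≠ 0 ∧ f a = y * a}
      rw [Nat.card_eq_fintype_card, hcard] at h2
      rw [← Set.ncard_eq_toFinset_card']
      omega
  obtain ⟨m, hmn, hm, hJ⟩ := exists_dvd_val_of_add_mem (Z := {k : ZMod n | ρ k ≠ 0})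
    (J := {j | a j ≠ 0}) hρ0 (by
      intro i hi j hj hij
      have hij0 : i + j ≠ 0 := fun h => hρ0 (h ▸ hij)
      have h := hrel' _ hij0
      rw [hij, mul_zero] at h
      have hi' : a (i + j - i) ^ q ^ i.val ≠ 0 := pow_ne_zero _ (by simpa using hj)
      obtain ⟨k, hk, hkmax⟩ := Finset.exists_max_image
        (Finset.univ.filter fun k => a (i + j - k) ^ q ^ k.val ≠ 0 ∧ ρ k ≠ 0)
        (fun k => (ρ k).natDegree) ⟨i, by simpa using ⟨by simpa using hi', hi⟩⟩
      simp only [Finset.mem_filter, Finset.mem_univ, true_and] at hk hkmax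
      exact (natDegree_sum_smul_eq ρ (fun k => a (i + j - k) ^ q ^ k.val) k hk.1 hk.2
        (fun l h1 h2 => hkmax l ⟨h1, h2⟩) fun l h1 h2 => hρinj l k h1 hk.2 h2).1 h.symm)
    (by simpa using hneg)
  refine ⟨m, hmn, hm, fun l hl x => ?_⟩
  rw [ha, ha, Finset.mul_sum]
  refine Finset.sum_congr rfl fun j _ => ?_
  by_cases hj : a j = 0
  · simp [hj]
  · obtain ⟨t, ht⟩ := hJ j hj
    have : l ^ q ^ j.val = l := by
      rw [← pow_pow_mod hl, ht, Nat.mul_mod_right, pow_zero, pow_one]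
    rw [mul_pow, this]
    ring

end

theorem exists_subfield_natCard_eq_pow {K F : Type*} [Field K] [Fintype K] [Field F] [Fintype F]
    [Algebra K F] {m : ℕ} (hm : m ∣ Module.finrank K F) :
    ∃ E : Subfield F, Nat.card E = Fintype.card K ^ m ∧
      ∀ x ∈ E, x ^ Fintype.card K ^ m = x := by
  have hm0 : NeZero m := ⟨fun h => (Module.finrank_pos (R := K) (M := F)).ne'
    (Nat.eq_zero_of_zero_dvd (h ▸ hm))⟩
  obtain ⟨p, hp⟩ := CharP.exists K
  have : Fact p.Prime := ⟨CharP.char_is_prime K p⟩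
  obtain ⟨g⟩ := FiniteField.nonempty_algHom_of_finrank_dvd (F := K)
    (K := FiniteField.Extension K p m) (L := F) (by rwa [FiniteField.finrank_extension])
  have hcard : Nat.card (g : FiniteField.Extension K p m →+* F).fieldRange =
      Fintype.card K ^ m := by
    rw [← Nat.card_eq_fintype_card, ← FiniteField.natCard_extension K p m]
    exact (Nat.card_congr (Equiv.ofInjective g g.toRingHom.injective)).symm
  refine ⟨_, hcard, fun x hx => ?_⟩
  have : Fintype (g : FiniteField.Extension K p m →+* F).fieldRange := Fintype.ofFinite _
  rw [← hcard, Nat.card_eq_fintype_card]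
  exact congrArg Subtype.val
    (FiniteField.pow_card (⟨x, hx⟩ : (g : FiniteField.Extension K p m →+* F).fieldRange))

theorem exists_smul_mem_of_linSet_eq {F : Type} [Field F] {S T : Set (F × F)}
    (h : linSet F S = linSet F T) {u : F × F} (hu : u ∈ S) (hu0 : u ≠ 0) :
    ∃ c : F, c ≠ 0 ∧ c • u ∈ T := by
  obtain ⟨v, hv, -, huv⟩ : Submodule.span F {u} ∈ linSet F T := h ▸ ⟨u, hu, hu0, rfl⟩
  obtain ⟨c, rfl⟩ := Submodule.span_singleton_eq_span_singleton.1 huv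
  exact ⟨c, c.ne_zero, hv⟩

theorem exists_forall_snd_ne_mul_fst {F : Type} [Field F] [Fintype F] (S : Set (F × F))
    (h0 : 0 ∈ S) (hS : Nat.card S ≤ Nat.card F) :
    ∃ y : F, ∀ u ∈ S, u ≠ 0 → u.2 ≠ y * u.1 := by
  by_contra! hcon
  choose g hg hg0 hgy using hcon
  have hinj : Function.Injective fun y => (⟨g y, hg y⟩ : S) := by
    intro y z hyz
    have hyz : g y = g z := congrArg Subtype.val hyz
    have hy := hgy y
    have h1 : (g y).1 ≠ 0 := fun h => hg0 y (Prod.ext h (by rw [hy, h, mul_zero]; rfl))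
    rw [hyz, hgy z, ← hyz] at hy
    exact (mul_right_cancel₀ h1 hy).symm
  obtain ⟨y, hy⟩ := (hinj.bijective_of_nat_card_le hS).2 ⟨0, h0⟩
  exact hg0 y (congrArg Subtype.val hy)

/-- if `U` is a rank-`n` `F_q`-subspace of `W = F_{q^n} × F_{q^n}` whose
linear set `L_U` has maximum field of linearity `F_q`, then the rank of `L_U` is uniquely
defined: every `F_q`-subspace `V` with `L_V = L_U` has `dim_{F_q} V = n`. -/
theorem stmt_14 (p e n q : ℕ) (hp : p.Prime) (he : 0 < e) (hn : 0 < n) (hq : q = p ^ e)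
    (F : Type) [Field F] [Fintype F] (hF : Fintype.card F = q ^ n)
    (Fq : Subfield F) (hFq : Nat.card Fq = q)
    (U : Submodule Fq (F × F)) (hU : Module.finrank Fq U = n)
    (hmax : ∀ m : ℕ, m ∣ n → 1 < m → ∀ E : Subfield F, Nat.card E = q ^ m →
      ∀ U' : Submodule E (F × F), linSet F (U' : Set (F × F)) ≠ linSet F (U : Set (F × F)))
    (V : Submodule Fq (F × F))
    (hV : linSet F (V : Set (F × F)) = linSet F (U : Set (F × F))) :
    Module.finrank Fq V = n := by
  classical
  have : Fintype Fq := Fintype.ofFinite Fq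
  rw [Nat.card_eq_fintype_card] at hFq
  have hq2 : 2 ≤ q := hFq ▸ Fintype.one_lt_card
  have hfin : Module.finrank Fq F = n := by
    refine Nat.pow_right_injective hq2 ?_
    dsimp only
    rw [← hF, Module.card_eq_pow_finrank (K := Fq), hFq]
  have hcard : ∀ M : Submodule Fq (F × F), Nat.card M = q ^ Module.finrank Fq M := fun M => by
    rw [Module.natCard_eq_pow_finrank (K := Fq), Nat.card_eq_fintype_card, hFq]
  obtain ⟨y₀, hy₀⟩ := exists_forall_snd_ne_mul_fst (U : Set (F × F)) U.zero_mem (by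
    rw [Nat.card_eq_fintype_card (α := F), hF, ← hU]
    exact (hcard U).le)
  have hy₀V : ∀ v ∈ V, v ≠ 0 → v.2 ≠ y₀ * v.1 := fun v hv hv0 hvy => by
    obtain ⟨c, hc, hcv⟩ := exists_smul_mem_of_linSet_eq hV hv hv0
    refine hy₀ _ hcv (smul_ne_zero hc hv0) ?_
    simp only [Prod.smul_fst, Prod.smul_snd, smul_eq_mul, hvy]
    ring
  let π : F × F →ₗ[F] F := LinearMap.snd F F F - y₀ • LinearMap.fst F F F
  have hπ : ∀ u, π u = u.2 - y₀ * u.1 := fun u => rfl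
  have hπinj : ∀ M : Submodule Fq (F × F), (∀ v ∈ M, v ≠ 0 → v.2 ≠ y₀ * v.1) →
      Function.Injective ((π.restrictScalars Fq).domRestrict M) := by
    intro M hM
    rw [← LinearMap.ker_eq_bot, LinearMap.ker_eq_bot']
    intro v hv
    by_contra hv0
    exact hM v v.2 (by simpa using hv0) (sub_eq_zero.1 hv)
  let φ : U ≃ₗ[Fq] F := LinearEquiv.ofInjectiveOfFinrankEq
    ((π.restrictScalars Fq).domRestrict U) (hπinj U hy₀) (by rw [hU, hfin])
  have hφ : ∀ u : U, φ u = π u := fun u => rfl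
  let f : F →ₗ[Fq] F := (LinearMap.fst Fq F F).comp (U.subtype.comp φ.symm.toLinearMap)
  have hf : ∀ x, f x = (φ.symm x : F × F).1 := fun x => rfl
  have hUf : ∀ u : F × F, u ∈ U ↔ u.1 = f (π u) := by
    intro u
    refine ⟨fun hu => ?_, fun hu => ?_⟩
    · rw [hf, ← hφ ⟨u, hu⟩, φ.symm_apply_apply]
    · have h1 : π (φ.symm (π u)) = π u := by rw [← hφ, φ.apply_symm_apply]
      rw [hπ (φ.symm (π u)), ← hf, ← hu, hπ u, sub_left_inj] at h1
      have : u = φ.symm (π u) := Prod.ext (by rw [hu, hf]) h1.symm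
      exact this ▸ (φ.symm (π u)).2
  have hle : Module.finrank Fq V ≤ n :=
    hfin ▸ LinearMap.finrank_le_finrank_of_injective (hπinj V hy₀V)
  by_contra hne
  have hlt : Module.finrank Fq V < n := lt_of_le_of_ne hle hne
  obtain ⟨u, hu, hu0⟩ := (Submodule.ne_bot_iff U).1 fun h => by
    rw [h, finrank_bot] at hU
    omega
  by_cases hn2 : n = 1
  · obtain ⟨c, hc, hcu⟩ := exists_smul_mem_of_linSet_eq hV.symm hu hu0
    rw [Submodule.finrank_eq_zero.1 (by omega : Module.finrank Fq V = 0)] at hcu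
    exact smul_ne_zero hc hu0 hcu
  have hD : {y : F | ∃ a, a ≠ 0 ∧ f a = y * a}.ncard < Fintype.card Fq ^ (n - 1) := by
    have hsub : {y : F | ∃ a, a ≠ 0 ∧ f a = y * a} ⊆
        (fun v : F × F => v.1 / π v) '' ((V : Set (F × F)) \ {0}) := by
      rintro y ⟨a, ha, hfa⟩
      have h1 : (φ.symm a : F × F) ≠ 0 := by simpa using ha
      have h2 : π (φ.symm a) = a := by rw [← hφ, φ.apply_symm_apply]
      obtain ⟨c, hc, hcu⟩ := exists_smul_mem_of_linSet_eq hV.symm (φ.symm a).2 h1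
      refine ⟨_, ⟨hcu, smul_ne_zero hc h1⟩, ?_⟩
      dsimp only
      rw [map_smul, h2, Prod.smul_fst, ← hf, hfa, smul_eq_mul, smul_eq_mul]
      field_simp
    have h1 := (Set.ncard_le_ncard hsub).trans (Set.ncard_image_le (Set.toFinite _))
    rw [Set.ncard_sdiff_singleton_of_mem V.zero_mem] at h1
    have h2 : (V : Set (F × F)).ncard = q ^ Module.finrank Fq V := hcard V
    have h3 : q ^ Module.finrank Fq V ≤ q ^ (n - 1) :=
      Nat.pow_le_pow_right (by omega) (by omega)
    have h4 : 0 < q ^ Module.finrank Fq V := Nat.pow_pos (by omega)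
    rw [hFq]
    omega
  obtain ⟨m, hmn, hm, hfm⟩ := exists_dvd_map_mul_of_ncard_lt hfin (by omega) f hD
  obtain ⟨E, hE, hEpow⟩ := exists_subfield_natCard_eq_pow (K := Fq) (hfin ▸ hmn)
  let U' : Submodule E (F × F) :=
    { carrier := U
      add_mem' := U.add_mem
      zero_mem' := U.zero_mem
      smul_mem' := fun l u hu => by
        have hl : l • u = (l : F) • u := rfl
        rw [SetLike.mem_coe, hUf] at hu ⊢
        rw [hl, map_smul, smul_eq_mul, hfm _ (hEpow _ l.2), ← hu]
        rfl }
  exact hmax m hmn hm E (hFq ▸ hE) U' rfl
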